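/- arXiv:2404.05577 — 5 statements merged into one kernel-verified Lean document; each statement's English description precedes it below -/
import Mathlib

section
/- Let 0 < α < 1 and κ ≥ 0, and set μ(y) = |y|^{(2α−1)/2}. Let U : [0,∞) → ℝ be continuous, and define φ(y,t) = μ(y) ∫₀ᵗ e^{−(y²+κ)(t−s)} U(s) ds. Then for every t > 0, the integral ∫_ℝ μ(y) φ(y,t) dy converges absolutely and π^{−1} sin(απ) ∫_ℝ μ(y) φ(y,t) dy = e^{−κt} ∫₀ᵗ ((t−s)^{−α} / Γ(1−α)) e^{κs} U(s) ds. -/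
open MeasureTheory Real

/-!
The identity is Fubini's theorem applied to
`|y| ^ (2 * α - 1) * exp (-(y ^ 2 + κ) * (t - s)) * U s` on `ℝ × (0, t]`.
For fixed `τ = t - s > 0` the `y`-integral is the Gaussian moment
`∫ |y| ^ (2 * α - 1) * exp (-τ * y ^ 2) = Γ(α) * τ ^ (-α)` (`integral_gaussian_moment`), and
`τ ^ (-α)` is integrable at `0` because `α < 1`; as `U` is bounded on `[0, t]`, this gives absolute
integrability on the product (`integrable_kernel`). The constants match by Euler's reflection
formula `Γ(α) * Γ(1 - α) = π / sin (π * α)`.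
-/

lemma integral_gaussian_moment {α τ : ℝ} (hα0 : 0 < α) (hτ : 0 < τ) :
    ∫ y : ℝ, |y| ^ (2 * α - 1) * Real.exp (-τ * y ^ 2) = τ ^ (-α) * Real.Gamma α := by
  have h := integral_comp_abs (f := fun y : ℝ => y ^ (2 * α - 1) * Real.exp (-τ * y ^ 2))
  simp only [sq_abs] at h
  rw [h]
  have h2 := integral_rpow_mul_exp_neg_mul_rpow (p := 2) (q := 2 * α - 1) (b := τ) two_pos
    (by linarith) hτ
  simp only [Real.rpow_two] at h2
  rw [h2, show -(2 * α - 1 + 1) / 2 = -α by ring, show (2 * α - 1 + 1) / 2 = α by ring]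
  ring

lemma integrable_gaussian_moment {α τ : ℝ} (hα0 : 0 < α) (hτ : 0 < τ) :
    Integrable (fun y : ℝ => |y| ^ (2 * α - 1) * Real.exp (-τ * y ^ 2)) := by
  -- The Bochner integral of a non-integrable function is `0`, whereas this one is positive.
  refine Integrable.of_integral_ne_zero ?_
  rw [integral_gaussian_moment hα0 hτ]
  exact (mul_pos (Real.rpow_pos_of_pos hτ _) (Real.Gamma_pos_of_pos hα0)).ne'

lemma abs_rpow_half_mul_self (a y : ℝ) : |y| ^ (a / 2) * |y| ^ (a / 2) = |y| ^ a := by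
  rw [← sq, ← Real.rpow_mul_natCast (abs_nonneg y)]
  congr 1
  push_cast
  ring

lemma kernel_eq (α κ t y s u : ℝ) :
    |y| ^ (2 * α - 1) * (Real.exp (-(y ^ 2 + κ) * (t - s)) * u) =
      (|y| ^ (2 * α - 1) * Real.exp (-(t - s) * y ^ 2)) * (Real.exp (-κ * (t - s)) * u) := by
  rw [show -(y ^ 2 + κ) * (t - s) = -(t - s) * y ^ 2 + -κ * (t - s) by ring, Real.exp_add]
  ring

lemma integrable_kernel {α κ : ℝ} (hα0 : 0 < α) (hα1 : α < 1)
    {U : ℝ → ℝ} {t : ℝ} (hU : ContinuousOn U (Set.Icc 0 t)) (ht : 0 < t) :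
    Integrable (Function.uncurry fun y s : ℝ =>
      |y| ^ (2 * α - 1) * (Real.exp (-(y ^ 2 + κ) * (t - s)) * U s))
      (volume.prod (volume.restrict (Set.Ioo 0 t))) := by
  have hUm : AEStronglyMeasurable U (volume.restrict (Set.Ioo 0 t)) :=
    (hU.mono Set.Ioo_subset_Icc_self).aestronglyMeasurable measurableSet_Ioo
  have hm : AEStronglyMeasurable (Function.uncurry fun y s : ℝ =>
      |y| ^ (2 * α - 1) * (Real.exp (-(y ^ 2 + κ) * (t - s)) * U s))
      ((volume : Measure ℝ).prod (volume.restrict (Set.Ioo 0 t))) := by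
    have h1 : Measurable fun p : ℝ × ℝ => |p.1| ^ (2 * α - 1) := by fun_prop
    have h2 : Measurable fun p : ℝ × ℝ => Real.exp (-(p.1 ^ 2 + κ) * (t - p.2)) := by fun_prop
    exact h1.aestronglyMeasurable.mul (h2.aestronglyMeasurable.mul hUm.comp_snd)
  refine (integrable_prod_iff' hm).2 ⟨?_, ?_⟩
  · filter_upwards [ae_restrict_mem measurableSet_Ioo] with s hs
    simp only [Function.uncurry, kernel_eq]
    exact (integrable_gaussian_moment hα0 (sub_pos.2 hs.2)).mul_const _
  · have hr : IntervalIntegrable (fun s : ℝ => (t - s) ^ (-α)) volume 0 t := by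
      have := (intervalIntegral.intervalIntegrable_rpow' (a := t) (b := 0) (r := -α)
        (by linarith)).comp_sub_left t
      simpa using this
    have hc : ContinuousOn (fun s => Real.Gamma α * (Real.exp (-κ * (t - s)) * |U s|))
        (Set.uIcc 0 t) := by
      rw [Set.uIcc_of_le ht.le]
      have : ContinuousOn (fun s => |U s|) (Set.Icc 0 t) := hU.abs
      fun_prop
    have hi := hr.mul_continuousOn hc
    rw [intervalIntegrable_iff_integrableOn_Ioo_of_le ht.le] at hi
    refine Integrable.congr hi ?_
    filter_upwards [ae_restrict_mem measurableSet_Ioo] with s hs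
    have hn : ∀ y : ℝ, ‖(|y| ^ (2 * α - 1) * Real.exp (-(t - s) * y ^ 2)) *
        (Real.exp (-κ * (t - s)) * U s)‖ = (|y| ^ (2 * α - 1) * Real.exp (-(t - s) * y ^ 2)) *
        (Real.exp (-κ * (t - s)) * |U s|) := fun y => by
      rw [norm_mul, norm_mul, norm_mul, Real.norm_of_nonneg (by positivity),
        Real.norm_of_nonneg (by positivity), Real.norm_of_nonneg (by positivity), Real.norm_eq_abs]
    simp only [Function.uncurry, kernel_eq, hn]
    rw [integral_mul_const, integral_gaussian_moment hα0 (sub_pos.2 hs.2)]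
    ring

/-- The output of the diffusion realization equals the generalized
fractional integral of order `1-α` of the input `U` (Theorem 2.1 of the paper). -/
theorem stmt1 (α κ : ℝ) (hα0 : 0 < α) (hα1 : α < 1) (hκ : 0 ≤ κ)
    (U : ℝ → ℝ) (hU : ContinuousOn U (Set.Ici 0)) (t : ℝ) (ht : 0 < t) :
    Integrable (fun y : ℝ => |y| ^ ((2 * α - 1) / 2) *
      (|y| ^ ((2 * α - 1) / 2) *
        ∫ s in (0 : ℝ)..t, Real.exp (-(y ^ 2 + κ) * (t - s)) * U s)) ∧
    π⁻¹ * Real.sin (α * π) *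
        ∫ y : ℝ, |y| ^ ((2 * α - 1) / 2) *
          (|y| ^ ((2 * α - 1) / 2) *
            ∫ s in (0 : ℝ)..t, Real.exp (-(y ^ 2 + κ) * (t - s)) * U s) =
      Real.exp (-κ * t) *
        ∫ s in (0 : ℝ)..t, ((t - s) ^ (-α) / Real.Gamma (1 - α)) * Real.exp (κ * s) * U s := by
  have hk := integrable_kernel (κ := κ) hα0 hα1 (hU.mono Set.Icc_subset_Ici_self) ht
  have hφ : ∀ y : ℝ, |y| ^ ((2 * α - 1) / 2) * (|y| ^ ((2 * α - 1) / 2) *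
      ∫ s in (0 : ℝ)..t, Real.exp (-(y ^ 2 + κ) * (t - s)) * U s) =
      ∫ s in Set.Ioo 0 t, |y| ^ (2 * α - 1) * (Real.exp (-(y ^ 2 + κ) * (t - s)) * U s) := by
    intro y
    rw [← mul_assoc, abs_rpow_half_mul_self, intervalIntegral.integral_of_le ht.le,
      integral_Ioc_eq_integral_Ioo, integral_const_mul]
  simp only [hφ]
  refine ⟨hk.integral_prod_left, ?_⟩
  rw [integral_integral_swap hk, intervalIntegral.integral_of_le ht.le,
    integral_Ioc_eq_integral_Ioo, ← integral_const_mul, ← integral_const_mul]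
  refine setIntegral_congr_fun measurableSet_Ioo fun s hs => ?_
  have hsin : 0 < Real.sin (π * α) :=
    Real.sin_pos_of_pos_of_lt_pi (by positivity) (by nlinarith [Real.pi_pos])
  have hΓ : 0 < Real.Gamma (1 - α) := Real.Gamma_pos_of_pos (by linarith)
  have hrefl : π⁻¹ * Real.sin (α * π) * Real.Gamma α = (Real.Gamma (1 - α))⁻¹ := by
    have h := Real.Gamma_mul_Gamma_one_sub α
    rw [eq_div_iff hsin.ne'] at h
    refine eq_inv_of_mul_eq_one_left ?_
    rw [mul_comm α π, inv_mul_eq_div, div_mul_eq_mul_div,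
      div_mul_eq_mul_div, div_eq_one_iff_eq Real.pi_ne_zero]
    linarith
  simp only [kernel_eq]
  rw [integral_mul_const, integral_gaussian_moment hα0 (sub_pos.2 hs.2),
    show -κ * (t - s) = -κ * t + κ * s by ring, Real.exp_add, div_eq_mul_inv, ← hrefl]
  ring
end

section
/- Let 0 < α < 1, κ ≥ 0, and let λ ∈ ℂ with λ ∉ (−∞, −κ]. Then the complex-valued integral ∫_ℝ |y|^{2α−1}/(y² + κ + λ) dy converges absolutely and equals (π / sin(απ)) · (κ + λ)^{α−1}, where the complex power denotes the principal branch. -/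
/-!
Put `z = κ + λ`, a point of the slit plane. For real `z = x > 0`, write
`1 / (y² + x) = ∫_{s > 0} exp (-s (y² + x)) ds` and apply Fubini: the inner `y`-integral is the
Gaussian moment `Γ(α) s^(-α)`, and the remaining `s`-integral gives
`Γ(α) Γ(1 - α) x^(α - 1)`, which Euler's reflection formula evaluates
(`integral_abs_rpow_div_sq_add`). For general `z`, the elementary bound
`c (1 + t) ≤ |t + z|` for `t ≥ 0` (`exists_mul_one_add_le_norm_add`) dominates the integrand by the
real one at `x = 1`; this gives absolute convergence and holomorphy in `z`
(`differentiableOn_integral_stieltjes`), and the identity theorem on the connected slit plane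
extends the formula from the positive half-line.
-/

open MeasureTheory Real

lemma integral_abs_rpow_mul_exp_neg_mul_sq {α s : ℝ} (hα : 0 < α) (hs : 0 < s) :
    ∫ y : ℝ, |y| ^ (2 * α - 1) * exp (-s * y ^ 2) = Gamma α * s ^ (-α) := by
  have h1 := integral_comp_abs (f := fun y : ℝ => y ^ (2 * α - 1) * exp (-s * y ^ (2 : ℝ)))
  have h2 := integral_rpow_mul_exp_neg_mul_rpow (p := 2) (q := 2 * α - 1) (b := s)
    two_pos (by linarith) hs
  rw [h2] at h1
  simp only [rpow_two, sq_abs] at h1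
  rw [h1, show -(2 * α - 1 + 1) / 2 = -α by ring, show (2 * α - 1 + 1) / 2 = α by ring]
  ring

lemma integrable_abs_rpow_mul_exp_neg_mul_sq {α s : ℝ} (hα : 0 < α) (hs : 0 < s) :
    Integrable fun y : ℝ => |y| ^ (2 * α - 1) * exp (-s * y ^ 2) := by
  -- A nonzero Bochner integral forces integrability.
  refine Integrable.of_integral_ne_zero ?_
  rw [integral_abs_rpow_mul_exp_neg_mul_sq hα hs]
  exact (mul_pos (Gamma_pos_of_pos hα) (rpow_pos_of_pos hs _)).ne'

/-- The identity for a positive real parameter, with integrability. -/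
lemma integral_abs_rpow_div_sq_add {α x : ℝ} (hα0 : 0 < α) (hα1 : α < 1) (hx : 0 < x) :
    Integrable (fun y : ℝ => |y| ^ (2 * α - 1) / (y ^ 2 + x)) ∧
    ∫ y : ℝ, |y| ^ (2 * α - 1) / (y ^ 2 + x) = π / sin (α * π) * x ^ (α - 1) := by
  let ν : Measure ℝ := volume.restrict (Set.Ioi 0)
  let f : ℝ × ℝ → ℝ := fun p => |p.1| ^ (2 * α - 1) * exp (-p.2 * (p.1 ^ 2 + x))
  have hf : ∀ y s, f (y, s) = exp (-x * s) * (|y| ^ (2 * α - 1) * exp (-s * y ^ 2)) := by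
    intro y s
    simp only [f]
    rw [show -s * (y ^ 2 + x) = -x * s + -s * y ^ 2 by ring, exp_add]
    ring
  have hf0 : ∀ p, 0 ≤ f p := fun p => by positivity
  have hmeas : Measurable f := by
    simp only [f]
    fun_prop
  have hy : ∀ s, 0 < s → ∫ y, f (y, s) = Gamma α * (s ^ ((1 - α) - 1) * exp (-(x * s))) := by
    intro s hs
    simp only [hf]
    rw [integral_const_mul, integral_abs_rpow_mul_exp_neg_mul_sq hα0 hs,
      show 1 - α - 1 = -α by ring, neg_mul]
    ring
  have hs : ∀ y, ∫ s, f (y, s) ∂ν = |y| ^ (2 * α - 1) / (y ^ 2 + x) := by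
    intro y
    have hneg : -(y ^ 2 + x) < 0 := by nlinarith [sq_nonneg y]
    have h := integral_exp_mul_Ioi hneg 0
    simp only [f, ν]
    rw [integral_const_mul, div_eq_mul_inv]
    congr 1
    rw [show (fun s : ℝ => exp (-s * (y ^ 2 + x))) = fun s => exp (-(y ^ 2 + x) * s) from
      funext fun s => by ring_nf, h]
    rw [mul_zero, exp_zero, neg_div_neg_eq, one_div]
  have hval : ∫ s in Set.Ioi (0 : ℝ), ∫ y, f (y, s) = π / sin (α * π) * x ^ (α - 1) := by
    rw [setIntegral_congr_fun measurableSet_Ioi fun s hs => hy s hs, integral_const_mul,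
      integral_rpow_mul_exp_neg_mul_Ioi (by linarith) hx, mul_comm α π,
      ← Gamma_mul_Gamma_one_sub, one_div, inv_rpow hx.le, ← rpow_neg hx.le,
      show -(1 - α) = α - 1 by ring]
    ring
  have hpos : 0 < π / sin (α * π) * x ^ (α - 1) := by
    rw [mul_comm α π, ← Gamma_mul_Gamma_one_sub]
    exact mul_pos (mul_pos (Gamma_pos_of_pos hα0) (Gamma_pos_of_pos (by linarith)))
      (rpow_pos_of_pos hx _)
  have hint : Integrable f (volume.prod ν) := by
    rw [integrable_prod_iff' hmeas.aestronglyMeasurable]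
    constructor
    · refine (ae_restrict_iff' measurableSet_Ioi).2 (ae_of_all _ fun s hs => ?_)
      simp only [hf]
      exact (integrable_abs_rpow_mul_exp_neg_mul_sq hα0 hs).const_mul _
    · simp only [Real.norm_of_nonneg (hf0 _)]
      refine Integrable.of_integral_ne_zero ?_
      rw [hval]
      exact hpos.ne'
  constructor
  · have := hint.integral_prod_left
    simpa only [hs] using this
  · rw [← hval]
    have := integral_integral_swap (f := fun y s => f (y, s)) (μ := volume) (ν := ν) hint
    simpa only [hs] using this

/-- A point of the slit plane stays away from the ray of nonpositive reals, uniformly in the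
scale `1 + t`. -/
lemma exists_mul_one_add_le_norm_add {z : ℂ} (hz : z ∈ Complex.slitPlane) :
    ∃ c : ℝ, 0 < c ∧ ∀ t : ℝ, 0 ≤ t → c * (1 + t) ≤ ‖(t : ℂ) + z‖ := by
  have hr : 0 < ‖z‖ := norm_pos_iff.2 (Complex.slitPlane_ne_zero hz)
  have hre : 0 < ‖z‖ + z.re := by
    rcases (abs_le.1 (Complex.abs_re_le_norm z)).1.lt_or_eq with h | h
    · linarith
    · exfalso
      have him : z.im = 0 := by
        have h1 := Complex.sq_norm z
        rw [Complex.normSq_apply, ← h] at h1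
        nlinarith
      rcases hz with h2 | h2
      · linarith
      · exact h2 him
  -- With `r = ‖z‖` and `z = r e^{iθ}`, `q = cos² (θ / 2)` satisfies `q (t + r)² ≤ ‖t + z‖²`.
  set q : ℝ := (‖z‖ + z.re) / (2 * ‖z‖) with hq
  have hq0 : 0 < q := by positivity
  refine ⟨√q * min 1 ‖z‖, by positivity, fun t ht => ?_⟩
  have hkey : q * (t + ‖z‖) ^ 2 ≤ ‖(t : ℂ) + z‖ ^ 2 := by
    have h1 := Complex.sq_norm z
    have h2 := Complex.sq_norm ((t : ℂ) + z)
    rw [Complex.normSq_apply] at h1 h2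
    simp only [Complex.add_re, Complex.add_im, Complex.ofReal_re, Complex.ofReal_im] at h2
    rw [h2, hq, div_mul_eq_mul_div, div_le_iff₀ (by positivity)]
    have h3 : 0 ≤ (‖z‖ - z.re) * (t - ‖z‖) ^ 2 :=
      mul_nonneg (sub_nonneg.2 (Complex.re_le_norm z)) (sq_nonneg _)
    have h4 : (t + z.re) * (t + z.re) + (0 + z.im) * (0 + z.im)
        = t ^ 2 + 2 * t * z.re + ‖z‖ ^ 2 := by rw [h1]; ring
    rw [h4]
    nlinarith
  have hmin : min 1 ‖z‖ * (1 + t) ≤ t + ‖z‖ := by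
    nlinarith [min_le_left 1 ‖z‖, min_le_right 1 ‖z‖]
  calc √q * min 1 ‖z‖ * (1 + t) = √q * (min 1 ‖z‖ * (1 + t)) := by ring
    _ ≤ √q * (t + ‖z‖) := by gcongr
    _ = √(q * (t + ‖z‖) ^ 2) := by
      rw [sqrt_mul hq0.le, sqrt_sq (by positivity)]
    _ ≤ ‖(t : ℂ) + z‖ := (sqrt_le_left (norm_nonneg _)).2 hkey

lemma measurable_stieltjes (α : ℝ) (z : ℂ) (n : ℕ) :
    Measurable fun y : ℝ => ((|y| ^ (2 * α - 1) : ℝ) : ℂ) / ((y : ℂ) ^ 2 + z) ^ n := by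
  fun_prop

lemma integrable_stieltjes {α : ℝ} (hα0 : 0 < α) (hα1 : α < 1) {z : ℂ}
    (hz : z ∈ Complex.slitPlane) :
    Integrable fun y : ℝ => ((|y| ^ (2 * α - 1) : ℝ) : ℂ) / ((y : ℂ) ^ 2 + z) := by
  obtain ⟨c, hc, hb⟩ := exists_mul_one_add_le_norm_add hz
  refine ((integral_abs_rpow_div_sq_add hα0 hα1 one_pos).1.const_mul c⁻¹).mono'
    (by simpa using (measurable_stieltjes α z 1).aestronglyMeasurable) (ae_of_all _ fun y => ?_)
  have h := hb (y ^ 2) (sq_nonneg y)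
  push_cast at h
  rw [norm_div, Complex.norm_real, Real.norm_of_nonneg (by positivity)]
  calc |y| ^ (2 * α - 1) / ‖(y : ℂ) ^ 2 + z‖ ≤ |y| ^ (2 * α - 1) / (c * (1 + y ^ 2)) := by
        gcongr
    _ = c⁻¹ * (|y| ^ (2 * α - 1) / (y ^ 2 + 1)) := by
        rw [add_comm 1]; field_simp

lemma differentiableOn_integral_stieltjes {α : ℝ} (hα0 : 0 < α) (hα1 : α < 1) :
    DifferentiableOn ℂ
      (fun z : ℂ => ∫ y : ℝ, ((|y| ^ (2 * α - 1) : ℝ) : ℂ) / ((y : ℂ) ^ 2 + z))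
      Complex.slitPlane := by
  intro z hz
  obtain ⟨c, hc, hb⟩ := exists_mul_one_add_le_norm_add hz
  -- On the ball of radius `c / 2` the lower bound persists with constant `c / 2`.
  have hball : ∀ w ∈ Metric.ball z (c / 2), ∀ y : ℝ,
      c / 2 * (1 + y ^ 2) ≤ ‖(y : ℂ) ^ 2 + w‖ := by
    intro w hw y
    have h := hb (y ^ 2) (sq_nonneg y)
    push_cast at h
    rw [Metric.mem_ball, dist_comm, dist_eq_norm] at hw
    have h2 := norm_add_le ((y : ℂ) ^ 2 + w) (z - w)
    rw [show (y : ℂ) ^ 2 + w + (z - w) = (y : ℂ) ^ 2 + z by ring] at h2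
    nlinarith [sq_nonneg y]
  have hpos : ∀ y : ℝ, 0 < c / 2 * (1 + y ^ 2) := fun y => by positivity
  refine (hasDerivAt_integral_of_dominated_loc_of_deriv_le
    (F' := fun w y => -(((|y| ^ (2 * α - 1) : ℝ) : ℂ) / ((y : ℂ) ^ 2 + w) ^ 2))
    (bound := fun y => ((c / 2) ^ 2)⁻¹ * (|y| ^ (2 * α - 1) / (y ^ 2 + 1)))
    (Metric.ball_mem_nhds z (half_pos hc))
    (Filter.Eventually.of_forall fun w => by
      simpa using (measurable_stieltjes α w 1).aestronglyMeasurable)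
    (integrable_stieltjes hα0 hα1 hz) (measurable_stieltjes α z 2).neg.aestronglyMeasurable
    (ae_of_all _ fun y w hw => ?_)
    ((integral_abs_rpow_div_sq_add hα0 hα1 one_pos).1.const_mul _)
    (ae_of_all _ fun y w hw => ?_)).2.differentiableAt.differentiableWithinAt
  · have h := hball w hw y
    rw [norm_neg, norm_div, norm_pow, Complex.norm_real, Real.norm_of_nonneg (by positivity)]
    calc |y| ^ (2 * α - 1) / ‖(y : ℂ) ^ 2 + w‖ ^ 2
        ≤ |y| ^ (2 * α - 1) / (c / 2 * (1 + y ^ 2)) ^ 2 := by gcongr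
      _ ≤ |y| ^ (2 * α - 1) / ((c / 2) ^ 2 * (y ^ 2 + 1)) := by
          gcongr
          rw [mul_pow, add_comm 1]
          gcongr
          nlinarith [sq_nonneg y]
      _ = _ := by field_simp
  · have hne : (y : ℂ) ^ 2 + w ≠ 0 := norm_pos_iff.1 ((hpos y).trans_le (hball w hw y))
    have h := (((hasDerivAt_id w).const_add ((y : ℂ) ^ 2)).inv hne).const_mul
      (((|y| ^ (2 * α - 1) : ℝ) : ℂ))
    have hval : -(((|y| ^ (2 * α - 1) : ℝ) : ℂ) / ((y : ℂ) ^ 2 + w) ^ 2) =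
        ((|y| ^ (2 * α - 1) : ℝ) : ℂ) * (-1 / ((y : ℂ) ^ 2 + id w) ^ 2) := by
      rw [id]; ring
    rw [hval]
    exact h

lemma integral_stieltjes {α : ℝ} (hα0 : 0 < α) (hα1 : α < 1) {z : ℂ}
    (hz : z ∈ Complex.slitPlane) :
    ∫ y : ℝ, ((|y| ^ (2 * α - 1) : ℝ) : ℂ) / ((y : ℂ) ^ 2 + z) =
      ((π / Real.sin (α * π) : ℝ) : ℂ) * z ^ ((α : ℂ) - 1) := by
  have hopen := Complex.isOpen_slitPlane
  have hg : DifferentiableOn ℂ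
      (fun z : ℂ => ((π / Real.sin (α * π) : ℝ) : ℂ) * z ^ ((α : ℂ) - 1))
      Complex.slitPlane := fun w hw =>
    ((differentiableAt_id.cpow_const hw).const_mul _).differentiableWithinAt
  have hreal : ∀ x : ℝ, 0 < x →
      ∫ y : ℝ, ((|y| ^ (2 * α - 1) : ℝ) : ℂ) / ((y : ℂ) ^ 2 + (x : ℂ)) =
      ((π / Real.sin (α * π) : ℝ) : ℂ) * (x : ℂ) ^ ((α : ℂ) - 1) := by
    intro x hx
    have h := congrArg (fun r : ℝ => (r : ℂ)) (integral_abs_rpow_div_sq_add hα0 hα1 hx).2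
    simp only [← integral_complex_ofReal] at h
    rw [Complex.ofReal_mul, Complex.ofReal_cpow hx.le] at h
    push_cast at h ⊢
    exact h
  refine ((differentiableOn_integral_stieltjes hα0 hα1).analyticOnNhd
    hopen).eqOn_of_preconnected_of_frequently_eq (hg.analyticOnNhd hopen)
    (Complex.starConvex_one_slitPlane.isPathConnected
      Complex.one_mem_slitPlane).isConnected.isPreconnected
    Complex.one_mem_slitPlane ?_ hz
  -- The reals near `1` accumulate at `1`.
  have htend : Filter.Tendsto (fun x : ℝ => (x : ℂ)) (nhdsWithin 1 {1}ᶜ)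
      (nhdsWithin 1 {1}ᶜ) := by
    refine tendsto_nhdsWithin_iff.2 ⟨?_, ?_⟩
    · exact (Complex.continuous_ofReal.tendsto' 1 1 (by simp)).mono_left nhdsWithin_le_nhds
    · filter_upwards [self_mem_nhdsWithin] with x hx
      simpa using hx
  refine htend.frequently (Filter.Eventually.frequently ?_)
  filter_upwards [nhdsWithin_le_nhds (lt_mem_nhds one_pos)] with x hx using hreal x hx

/-- Lemma 2.2 of the paper: for `λ ∈ ℂ \ (-∞, -κ]`,
`∫_ℝ |y|^(2α-1)/(y² + κ + λ) dy = (π / sin(απ)) (κ + λ)^(α-1)` (principal branch). -/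
theorem stmt3 (α κ : ℝ) (hα0 : 0 < α) (hα1 : α < 1) (hκ : 0 ≤ κ)
    (lam : ℂ) (hlam : ∀ r : ℝ, r ≤ -κ → lam ≠ (r : ℂ)) :
    Integrable (fun y : ℝ =>
      ((|y| ^ (2 * α - 1) : ℝ) : ℂ) / ((y : ℂ) ^ 2 + (κ : ℂ) + lam)) ∧
    ∫ y : ℝ, ((|y| ^ (2 * α - 1) : ℝ) : ℂ) / ((y : ℂ) ^ 2 + (κ : ℂ) + lam) =
      ((π / Real.sin (α * π) : ℝ) : ℂ) * ((κ : ℂ) + lam) ^ ((α : ℂ) - 1) := by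
  have hz : (κ : ℂ) + lam ∈ Complex.slitPlane := by
    rw [Complex.mem_slitPlane_iff]
    by_contra! h
    simp only [Complex.add_re, Complex.add_im, Complex.ofReal_re, Complex.ofReal_im,
      zero_add] at h
    exact hlam lam.re (by linarith) (Complex.ext (by simp) (by simp [h.2]))
  simp only [add_assoc]
  exact ⟨integrable_stieltjes hα0 hα1 hz, integral_stieltjes hα0 hα1 hz⟩
end

section
/- Let 0 < α < 1, κ ≥ 0 and λ ∈ ℝ with λ ≠ 0. Then Re(iλ (κ + iλ)^{α−1}) = (sin(απ)/π) · λ² · ∫_ℝ |y|^{2α−1} / ((y²+κ)² + λ²) dy, and in particular Re(iλ (κ + iλ)^{α−1}) > 0. -/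
/-!
The identity rests on the Stieltjes formula
`∫₀^∞ t^(α-1) / (t + z) dt = (π / sin (πα)) z^(α-1)`.
For real `z = x > 0` it follows from the Fubini theorem applied to `t^(α-1) e^(-s(t+x))` on the
quadrant, which produces `Γ(α) Γ(1-α) x^(α-1)`, and from the Euler reflection formula
(`stieltjes_real`). Both sides are holomorphic on `{z | 0 < Re z + |Im z|}`, which is star-shaped
about `1` and contained in the slit plane, so the formula extends to that region by the identity
theorem (`stieltjes_complex`). The region contains `κ + iλ` for every `κ ≥ 0` and `λ ≠ 0`, so the
boundary case `κ = 0` needs no limiting argument. Multiplying by `iλ`, taking real parts, and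
substituting `t = y²` gives the claim; positivity is that of the integrand.
-/

open MeasureTheory Real

/-- The Stieltjes integral on the positive axis. Integrability is part of the conclusion: it is what
dominates the complex integrand later. -/
lemma stieltjes_real {α x : ℝ} (hα0 : 0 < α) (hα1 : α < 1) (hx : 0 < x) :
    IntegrableOn (fun t : ℝ => t ^ (α - 1) / (t + x)) (Set.Ioi 0) ∧
    ∫ t in Set.Ioi (0 : ℝ), t ^ (α - 1) / (t + x) = π / Real.sin (π * α) * x ^ (α - 1) := by
  set μ : Measure ℝ := volume.restrict (Set.Ioi 0) with hμ
  set F : ℝ → ℝ → ℝ := fun t s => t ^ (α - 1) * rexp (-(s * t)) * rexp (-(x * s)) with hF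
  have hmeas : AEStronglyMeasurable (Function.uncurry F) (μ.prod μ) := by
    apply Measurable.aestronglyMeasurable
    simp only [hF, Function.uncurry_def]
    fun_prop
  have hpos : ∀ᵐ s ∂μ, (0 : ℝ) < s := ae_restrict_mem measurableSet_Ioi
  have inner_t : ∀ s : ℝ, 0 < s →
      ∫ t, F t s ∂μ = Real.Gamma α * (s ^ ((1 - α) - 1) * rexp (-(x * s))) := by
    intro s hs
    simp only [hF]
    rw [integral_mul_const, hμ, Real.integral_rpow_mul_exp_neg_mul_Ioi hα0 hs,
      show (1 - α) - 1 = -α by ring, Real.rpow_neg hs.le, one_div, Real.inv_rpow hs.le]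
    ring
  have inner_s : ∀ t : ℝ, 0 < t → ∫ s, F t s ∂μ = t ^ (α - 1) / (t + x) := by
    intro t ht
    have h1 : ∀ s, F t s = t ^ (α - 1) * (s ^ ((1 : ℝ) - 1) * rexp (-((t + x) * s))) := by
      intro s
      simp only [hF, sub_self, Real.rpow_zero, one_mul, mul_assoc, ← Real.exp_add]
      congr 2
      ring
    simp only [h1]
    rw [integral_const_mul, hμ, Real.integral_rpow_mul_exp_neg_mul_Ioi one_pos (by linarith)]
    simp [div_eq_mul_inv]
  have hint : ∀ {a r : ℝ}, 0 < a → 0 < r →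
      Integrable (fun t : ℝ => t ^ (a - 1) * rexp (-(r * t))) μ := by
    intro a r ha hr
    have := integrableOn_rpow_mul_exp_neg_mul_rpow (p := 1) (s := a - 1) (b := r)
      (by linarith) one_pos hr
    simpa [IntegrableOn, neg_mul] using this
  have hFint : Integrable (Function.uncurry F) (μ.prod μ) := by
    rw [integrable_prod_iff' hmeas]
    constructor
    · filter_upwards [hpos] with s hs
      exact (hint hα0 hs).mul_const (rexp (-(x * s)))
    · have h2 : Integrable (fun s : ℝ => Real.Gamma α * (s ^ ((1 - α) - 1) * rexp (-(x * s)))) μ :=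
        (hint (by linarith) hx).const_mul _
      refine h2.congr ?_
      filter_upwards [hpos] with s hs
      rw [← inner_t s hs]
      refine integral_congr_ae ?_
      filter_upwards [hpos] with t ht
      have : 0 ≤ F t s := by simp only [hF]; positivity
      simp [Function.uncurry, abs_of_nonneg this]
  constructor
  · refine (hFint.integral_prod_left).congr ?_
    filter_upwards [hpos] with t ht
    exact inner_s t ht
  · have hswap := integral_integral_swap hFint
    have h1 : ∫ t, ∫ s, F t s ∂μ ∂μ = ∫ t, t ^ (α - 1) / (t + x) ∂μ :=
      integral_congr_ae (by filter_upwards [hpos] with t ht using inner_s t ht)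
    have h2 : ∫ s, ∫ t, F t s ∂μ ∂μ =
        ∫ s, Real.Gamma α * (s ^ ((1 - α) - 1) * rexp (-(x * s))) ∂μ :=
      integral_congr_ae (by filter_upwards [hpos] with s hs using inner_t s hs)
    rw [h1, h2, integral_const_mul, hμ,
      Real.integral_rpow_mul_exp_neg_mul_Ioi (by linarith) hx] at hswap
    rw [hswap, ← Real.Gamma_mul_Gamma_one_sub, one_div, Real.inv_rpow hx.le,
      ← Real.rpow_neg hx.le, neg_sub]
    ring

lemma stieltjes_denominator_bound {t : ℝ} {z : ℂ} :
    (t + (z.re + |z.im|)) / 2 ≤ ‖(t : ℂ) + z‖ := by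
  have h1 := Complex.abs_re_le_norm ((t : ℂ) + z)
  have h2 := Complex.abs_im_le_norm ((t : ℂ) + z)
  simp only [Complex.add_re, Complex.ofReal_re, Complex.add_im, Complex.ofReal_im, zero_add]
    at h1 h2
  have := le_abs_self (t + z.re)
  linarith

lemma stieltjes_measurable (α : ℝ) (z : ℂ) :
    Measurable (fun t : ℝ => ((t ^ (α - 1) : ℝ) : ℂ) / ((t : ℂ) + z)) := by
  fun_prop

lemma stieltjes_integrable {α : ℝ} (hα0 : 0 < α) (hα1 : α < 1) {z : ℂ}
    (hz : 0 < z.re + |z.im|) :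
    IntegrableOn (fun t : ℝ => ((t ^ (α - 1) : ℝ) : ℂ) / ((t : ℂ) + z)) (Set.Ioi 0) := by
  refine Integrable.mono' ((stieltjes_real hα0 hα1 hz).1.const_mul 2)
    (stieltjes_measurable α z).aestronglyMeasurable ?_
  filter_upwards [ae_restrict_mem measurableSet_Ioi] with t ht
  have ht : 0 < t := ht
  have hb := stieltjes_denominator_bound (t := t) (z := z)
  have hp : 0 < t + (z.re + |z.im|) := by linarith
  rw [norm_div, Complex.norm_real, Real.norm_of_nonneg (by positivity)]
  calc t ^ (α - 1) / ‖(t : ℂ) + z‖ ≤ t ^ (α - 1) / ((t + (z.re + |z.im|)) / 2) := by gcongr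
    _ = _ := by field_simp

lemma stieltjes_differentiableAt {α : ℝ} (hα0 : 0 < α) (hα1 : α < 1) {z₀ : ℂ}
    (hz : 0 < z₀.re + |z₀.im|) :
    DifferentiableAt ℂ
      (fun z : ℂ => ∫ t in Set.Ioi (0 : ℝ), ((t ^ (α - 1) : ℝ) : ℂ) / ((t : ℂ) + z)) z₀ := by
  set m := z₀.re + |z₀.im| with hm
  -- `z ↦ Re z + |Im z|` is 2-Lipschitz, so it stays above `m / 2` on this ball.
  have hball : ∀ z ∈ Metric.ball z₀ (m / 4), m / 2 ≤ z.re + |z.im| := by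
    intro z hzb
    rw [Metric.mem_ball, dist_comm, dist_eq_norm] at hzb
    have h1 := (le_abs_self _).trans (Complex.abs_re_le_norm (z₀ - z))
    have h2 := Complex.abs_im_le_norm (z₀ - z)
    have h3 := abs_sub_abs_le_abs_sub z₀.im z.im
    simp only [Complex.sub_re, Complex.sub_im] at h1 h2
    linarith
  have hdom := (stieltjes_real hα0 hα1 (half_pos hz)).1.const_mul (8 / m)
  have key := hasDerivAt_integral_of_dominated_loc_of_deriv_le
    (μ := volume.restrict (Set.Ioi (0 : ℝ))) (x₀ := z₀) (s := Metric.ball z₀ (m / 4))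
    (F := fun (z : ℂ) (t : ℝ) => ((t ^ (α - 1) : ℝ) : ℂ) / ((t : ℂ) + z))
    (F' := fun (z : ℂ) (t : ℝ) => -((t ^ (α - 1) : ℝ) : ℂ) / ((t : ℂ) + z) ^ 2)
    (bound := fun t : ℝ => 8 / m * (t ^ (α - 1) / (t + m / 2)))
    (Metric.ball_mem_nhds z₀ (by linarith))
    (Filter.Eventually.of_forall fun z => (stieltjes_measurable α z).aestronglyMeasurable)
    (stieltjes_integrable hα0 hα1 hz)
    (Measurable.aestronglyMeasurable (by fun_prop))
    ?_ hdom ?_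
  · exact key.2.differentiableAt
  · filter_upwards [ae_restrict_mem measurableSet_Ioi] with t ht z hzb
    have ht : 0 < t := ht
    have hb : (t + m / 2) / 2 ≤ ‖(t : ℂ) + z‖ := by
      have := stieltjes_denominator_bound (t := t) (z := z)
      linarith [hball z hzb]
    rw [norm_div, norm_neg, Complex.norm_real, Real.norm_of_nonneg (by positivity), norm_pow]
    calc t ^ (α - 1) / ‖(t : ℂ) + z‖ ^ 2
        ≤ t ^ (α - 1) / (m / 4 * ((t + m / 2) / 2)) := by
          rw [sq]
          gcongr
          linarith
      _ = _ := by field_simp; norm_num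
  · filter_upwards [ae_restrict_mem measurableSet_Ioi] with t ht z hzb
    have ht : 0 < t := ht
    have hb := stieltjes_denominator_bound (t := t) (z := z)
    have hne : (t : ℂ) + z ≠ 0 := by
      rw [← norm_pos_iff]
      linarith [hball z hzb]
    have h := (hasDerivAt_const z ((t ^ (α - 1) : ℝ) : ℂ)).div
      ((hasDerivAt_id z).const_add (t : ℂ)) hne
    have hd : (0 * ((t : ℂ) + id z) - ((t ^ (α - 1) : ℝ) : ℂ) * 1) / ((t : ℂ) + id z) ^ 2 =
        -((t ^ (α - 1) : ℝ) : ℂ) / ((t : ℂ) + z) ^ 2 := by simp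
    rw [hd] at h
    exact h

/-- The Stieltjes formula, continued analytically to a region which contains the closed right
half-plane without the origin. -/
lemma stieltjes_complex {α : ℝ} (hα0 : 0 < α) (hα1 : α < 1) {z : ℂ} (hz : 0 < z.re + |z.im|) :
    ∫ t in Set.Ioi (0 : ℝ), ((t ^ (α - 1) : ℝ) : ℂ) / ((t : ℂ) + z) =
      ((π / Real.sin (π * α) : ℝ) : ℂ) * z ^ ((α : ℂ) - 1) := by
  set U : Set ℂ := {w | 0 < w.re + |w.im|} with hU
  have hUo : IsOpen U := isOpen_lt continuous_const (by fun_prop)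
  have h1U : (1 : ℂ) ∈ U := by simp [hU]
  have hUc : IsPreconnected U := by
    have hstar : StarConvex ℝ (1 : ℂ) U := by
      intro w hw a b ha hb hab
      have hw : 0 < w.re + |w.im| := hw
      simp only [hU, Set.mem_ofPred_eq, Complex.add_re, Complex.add_im, Complex.real_smul,
        Complex.mul_re, Complex.mul_im, Complex.ofReal_re, Complex.ofReal_im,
        zero_mul, sub_zero, zero_add, add_zero, mul_one, abs_mul,
        abs_of_nonneg hb]
      rcases hb.eq_or_lt with rfl | hb'
      · simp; linarith
      · nlinarith [mul_pos hb' hw]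
    exact (hstar.isPathConnected h1U).isConnected.isPreconnected
  have hUs : ∀ w ∈ U, w ∈ Complex.slitPlane := by
    intro w hw
    rw [Complex.mem_slitPlane_iff]
    by_contra! h
    have hw : 0 < w.re + |w.im| := hw
    rw [h.2, abs_zero] at hw
    linarith [h.1]
  have hf : AnalyticOnNhd ℂ
      (fun z : ℂ => ∫ t in Set.Ioi (0 : ℝ), ((t ^ (α - 1) : ℝ) : ℂ) / ((t : ℂ) + z)) U :=
    DifferentiableOn.analyticOnNhd
      (fun w hw => (stieltjes_differentiableAt hα0 hα1 hw).differentiableWithinAt) hUo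
  have hg : AnalyticOnNhd ℂ
      (fun z : ℂ => ((π / Real.sin (π * α) : ℝ) : ℂ) * z ^ ((α : ℂ) - 1)) U :=
    DifferentiableOn.analyticOnNhd
      (fun w hw => ((differentiableAt_id.cpow_const (hUs w hw)).const_mul
        _).differentiableWithinAt) hUo
  have hreal : ∀ x : ℝ, 0 < x →
      ∫ t in Set.Ioi (0 : ℝ), ((t ^ (α - 1) : ℝ) : ℂ) / ((t : ℂ) + (x : ℂ)) =
      ((π / Real.sin (π * α) : ℝ) : ℂ) * (x : ℂ) ^ ((α : ℂ) - 1) := by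
    intro x hx
    have h := congrArg (fun r : ℝ => (r : ℂ)) (stieltjes_real hα0 hα1 hx).2
    simp only [← integral_complex_ofReal] at h
    rw [Complex.ofReal_mul, Complex.ofReal_cpow hx.le] at h
    simpa using h
  refine hf.eqOn_of_preconnected_of_frequently_eq hg hUc h1U ?_ hz
  -- The real points `1 + 1 / (n + 1)` accumulate at `1`.
  have hlim : Filter.Tendsto (fun n : ℕ => (((1 + 1 / ((n : ℝ) + 1) : ℝ)) : ℂ)) Filter.atTop
      (nhdsWithin 1 {1}ᶜ) := by
    refine tendsto_nhdsWithin_iff.2 ⟨?_, Filter.Eventually.of_forall fun n => ?_⟩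
    · have h := (tendsto_one_div_add_atTop_nhds_zero_nat (𝕜 := ℝ)).const_add 1
      have h' := (Complex.continuous_ofReal.tendsto _).comp h
      simpa [Function.comp_def] using h'
    · have hn : (0 : ℝ) < 1 / ((n : ℝ) + 1) := by positivity
      intro h
      have h : ((1 + 1 / ((n : ℝ) + 1) : ℝ) : ℂ) = 1 := h
      rw [Complex.ofReal_eq_one] at h
      linarith
  exact hlim.frequently (Filter.Frequently.of_forall fun n => hreal _ (by positivity))

/-- The substitution `t = y²`, together with evenness of the integrand. -/
lemma integral_abs_rpow_eq (α κ lam : ℝ) :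
    ∫ y : ℝ, |y| ^ (2 * α - 1) / ((y ^ 2 + κ) ^ 2 + lam ^ 2) =
      ∫ t in Set.Ioi (0 : ℝ), t ^ (α - 1) / ((t + κ) ^ 2 + lam ^ 2) := by
  have h1 := integral_comp_abs
    (f := fun y : ℝ => y ^ (2 * α - 1) / ((y ^ 2 + κ) ^ 2 + lam ^ 2))
  simp only [sq_abs] at h1
  rw [h1, ← integral_comp_rpow_Ioi_of_pos (p := 2)
    (g := fun t : ℝ => t ^ (α - 1) / ((t + κ) ^ 2 + lam ^ 2)) two_pos, ← integral_const_mul]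
  refine setIntegral_congr_fun measurableSet_Ioi fun y hy => ?_
  have hy : 0 < y := hy
  have h2 : y ^ (2 * α - 1) = y ^ ((2 : ℝ) - 1) * (y ^ (2 : ℝ)) ^ (α - 1) := by
    rw [← Real.rpow_mul hy.le, ← Real.rpow_add hy]
    congr 1
    ring
  simp only [smul_eq_mul, h2, Real.rpow_two]
  ring

/-- the real part of the fractional damping symbol:
`Re(iλ (κ + iλ)^(α-1)) = (sin(απ)/π) λ² ∫_ℝ |y|^(2α-1)/((y²+κ)²+λ²) dy > 0`. -/
theorem stmt6 (α κ lam : ℝ) (hα0 : 0 < α) (hα1 : α < 1) (hκ : 0 ≤ κ) (hlam : lam ≠ 0) :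
    (Complex.I * (lam : ℂ) * ((κ : ℂ) + Complex.I * (lam : ℂ)) ^ ((α : ℂ) - 1)).re =
      (Real.sin (α * π) / π) * lam ^ 2 *
        ∫ y : ℝ, |y| ^ (2 * α - 1) / ((y ^ 2 + κ) ^ 2 + lam ^ 2) ∧
    0 < (Complex.I * (lam : ℂ) * ((κ : ℂ) + Complex.I * (lam : ℂ)) ^ ((α : ℂ) - 1)).re := by
  set z : ℂ := (κ : ℂ) + Complex.I * (lam : ℂ) with hzdef
  have hz : 0 < z.re + |z.im| := by
    have := abs_pos.2 hlam
    simp [hzdef]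
    linarith
  have hlam2 : 0 < lam ^ 2 := by positivity
  have hsin : 0 < Real.sin (α * π) :=
    Real.sin_pos_of_pos_of_lt_pi (by positivity) (by nlinarith [Real.pi_pos])
  have hint := (stieltjes_integrable hα0 hα1 hz).const_mul (Complex.I * (lam : ℂ))
  have hre : ∀ t : ℝ,
      RCLike.re (Complex.I * (lam : ℂ) * (((t ^ (α - 1) : ℝ) : ℂ) / ((t : ℂ) + z))) =
      lam ^ 2 * (t ^ (α - 1) / ((t + κ) ^ 2 + lam ^ 2)) := by
    intro t
    have hne : (t + κ) ^ 2 + lam ^ 2 ≠ 0 := by positivity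
    have hns : Complex.normSq ((t : ℂ) + z) = (t + κ) ^ 2 + lam ^ 2 := by
      simp [Complex.normSq_apply, hzdef]
      ring
    rw [RCLike.re_eq_complex_re, Complex.mul_re, Complex.div_re, Complex.div_im, hns]
    simp [hzdef]
    field_simp
  have hI : Integrable (fun t : ℝ => lam ^ 2 * (t ^ (α - 1) / ((t + κ) ^ 2 + lam ^ 2)))
      (volume.restrict (Set.Ioi 0)) := by
    simpa only [hre] using hint.re
  have hval := integral_re hint
  simp only [hre] at hval
  rw [integral_const_mul, integral_const_mul, stieltjes_complex hα0 hα1 hz, mul_left_comm,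
    RCLike.re_eq_complex_re, Complex.re_ofReal_mul, mul_comm π α] at hval
  have hmain : (Complex.I * (lam : ℂ) * z ^ ((α : ℂ) - 1)).re =
      (Real.sin (α * π) / π) * lam ^ 2 *
        ∫ t in Set.Ioi (0 : ℝ), t ^ (α - 1) / ((t + κ) ^ 2 + lam ^ 2) := by
    rw [mul_assoc _ (lam ^ 2), hval]
    have := Real.pi_ne_zero
    field_simp
  refine ⟨by rw [hmain, integral_abs_rpow_eq], ?_⟩
  rw [hmain, mul_assoc, ← integral_const_mul]
  refine mul_pos (div_pos hsin Real.pi_pos) ?_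
  rw [setIntegral_pos_iff_support_of_nonneg_ae _ hI]
  · have hsub : Set.Ioi (0 : ℝ) ⊆
        (Function.support fun t : ℝ => lam ^ 2 * (t ^ (α - 1) / ((t + κ) ^ 2 + lam ^ 2))) ∩
          Set.Ioi 0 := by
      intro t ht
      have ht' : 0 < t := ht
      refine ⟨?_, ht⟩
      rw [Function.mem_support]
      positivity
    exact lt_of_lt_of_le (by simp) (measure_mono hsub)
  · filter_upwards [ae_restrict_mem measurableSet_Ioi] with t ht
    have ht : 0 < t := ht
    simp only [Pi.zero_apply]
    positivity
end

section
/- Let ρ_z, ρ_u, a₁, a₃ > 0, a₂ ∈ ℝ with a₂ ≠ 0 and a₁a₃ > a₂², γ > 0, κ ≥ 0, 0 < α < 1. Set m = a₁/ρ_z + a₃/ρ_u, q = (a₁a₃ − a₂²)/(ρ_z ρ_u), D = (a₁/ρ_z − a₃/ρ_u)² + 4a₂²/(ρ_z ρ_u), and let l ∈ {l_+, l_−} with l_± = √((m ± √D)/2). Let (μ_n) be positive reals with μ_n → ∞ and let (λ_n) be complex numbers satisfying λ_n⁴ + m μ_n² λ_n² + (γ/ρ_z) λ_n³ (λ_n +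 κ)^{α−1} + (γ/ρ_z)(a₃/ρ_u) μ_n² λ_n (λ_n + κ)^{α−1} + q μ_n⁴ = 0 for every n (principal branch powers), and suppose λ_n/(i μ_n) → l. Then μ_n^{1−α} (λ_n − i l μ_n) → −e^{i(α−1)π/2} · ((l² − a₃/ρ_u)/(4l² − 2m)) · (γ/ρ_z) · l^{α−1}. In particular μ_n^{1−α} Re(λ_n) → β, where β = −((l² − a₃/ρ_u)/(4l² − 2m)) · (γ/(ρ_z l^{1−α})) · cos((1−α)π/2), and β < 0. -/
/-!
Write `λₙ = i μₙ wₙ`, so that `wₙ → l`. Dividing the characteristic equation by `μₙ⁴` and using that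
`l²` is a root of `X² - m X + q`, it becomes
`(wₙ - l) (wₙ + l) (wₙ² + l² - m) = (γ/ρz) i wₙ (wₙ² - a₃/ρu) (λₙ + κ)^(α-1) / μₙ`.
By homogeneity `μₙ^(1-α) (λₙ + κ)^(α-1) = ((λₙ + κ)/μₙ)^(α-1)`, and `(λₙ + κ)/μₙ → i l` stays away
from the branch cut, so this tends to `l^(α-1) e^{i(α-1)π/2}`. Solving for `wₙ - l` and multiplying
by `i μₙ μₙ^(1-α)` gives the first limit; its real part gives the second one.

The denominator does not vanish and `β < 0` because of
`(l² - a₃/ρu) (l² - a₁/ρz) = a₂²/(ρz ρu) > 0`: both factors have the same sign, which is then also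
the sign of their sum `2l² - m`.
-/

open Real Filter

/-- The number `l` is positive and `l²` is a root of `X² - m X + q`, written as
`(X - b) (X - A) = c`; here `A = a₁/ρz`, `b = a₃/ρu` and `c = a₂²/(ρz ρu)`. -/
lemma root_facts (A b c l : ℝ) (hA : 0 < A) (hb : 0 < b) (hc : 0 < c) (hcAb : c < A * b)
    (hl : l = √(((A + b) + √((A - b) ^ 2 + 4 * c)) / 2) ∨
      l = √(((A + b) - √((A - b) ^ 2 + 4 * c)) / 2)) :
    0 < l ∧ (l ^ 2 - b) * (l ^ 2 - A) = c := by
  have hD : √((A - b) ^ 2 + 4 * c) ^ 2 = (A - b) ^ 2 + 4 * c := Real.sq_sqrt (by positivity)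
  have hD0 := Real.sqrt_nonneg ((A - b) ^ 2 + 4 * c)
  set d := √((A - b) ^ 2 + 4 * c) with hd
  have hlt : d < A + b := by nlinarith
  rcases hl with rfl | rfl
  · have h0 : 0 < (A + b + d) / 2 := by linarith
    refine ⟨Real.sqrt_pos.2 h0, ?_⟩
    rw [Real.sq_sqrt h0.le]
    linear_combination hD / 4
  · have h0 : 0 < (A + b - d) / 2 := by linarith
    refine ⟨Real.sqrt_pos.2 h0, ?_⟩
    rw [Real.sq_sqrt h0.le]
    linear_combination hD / 4

/-- Division by a positive real does not change the argument, so the principal power is homogeneous. -/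
lemma rpow_mul_cpow (r α : ℝ) (hr : 0 < r) (z : ℂ) (hz : z ≠ 0) :
    ((r ^ (1 - α) : ℝ) : ℂ) * z ^ ((α : ℂ) - 1) = (z / r) ^ ((α : ℂ) - 1) := by
  have hr' : (r : ℂ) ≠ 0 := by exact_mod_cast hr.ne'
  have hz' : z / r ≠ 0 := div_ne_zero hz hr'
  have hlog : Complex.log z = (Real.log r : ℂ) + Complex.log (z / r) := by
    rw [← Complex.log_ofReal_mul hr hz', mul_div_cancel₀ _ hr']
  rw [Complex.ofReal_cpow hr.le, Complex.cpow_def_of_ne_zero hz, Complex.cpow_def_of_ne_zero hz',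
    Complex.cpow_def_of_ne_zero hr', ← Complex.exp_add, hlog, Complex.ofReal_log hr.le]
  congr 1
  push_cast
  ring

lemma I_mul_cpow (l α : ℝ) (hl : 0 < l) :
    (Complex.I * l) ^ ((α : ℂ) - 1) =
      Complex.exp (Complex.I * ((α : ℂ) - 1) * (π : ℂ) / 2) * ((l ^ (α - 1) : ℝ) : ℂ) := by
  have hl' : (l : ℂ) ≠ 0 := by exact_mod_cast hl.ne'
  rw [mul_comm Complex.I, Complex.cpow_def_of_ne_zero (mul_ne_zero hl' Complex.I_ne_zero),
    Complex.log_ofReal_mul hl Complex.I_ne_zero, Complex.log_I, Complex.ofReal_cpow hl.le,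
    Complex.cpow_def_of_ne_zero hl', ← Complex.exp_add, Complex.ofReal_log hl.le]
  congr 1
  push_cast
  ring

/-- The characteristic equation in the rescaled unknown `w = λ/(i μ)`, solved for
`μ^(1-α) (λ - i l μ)`; `x` stands for `λ`, `R` for `μ^(1-α)` and `P` for `(λ + κ)^(α-1)`. -/
lemma solve_char (A b c g l μ R P w x : ℂ) (hμ : μ ≠ 0) (hx : x = Complex.I * μ * w)
    (hroot : (l ^ 2 - b) * (l ^ 2 - A) = c)
    (hden : (w + l) * (w ^ 2 + l ^ 2 - (A + b)) ≠ 0)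
    (hchar : x ^ 4 + (A + b) * μ ^ 2 * x ^ 2 + g * x ^ 3 * P + g * b * μ ^ 2 * x * P
      + (A * b - c) * μ ^ 4 = 0) :
    R * (x - Complex.I * l * μ) =
      -(g * w * (w ^ 2 - b) * (R * P)) / ((w + l) * (w ^ 2 + l ^ 2 - (A + b))) := by
  have hI : Complex.I ^ 2 = -1 := Complex.I_sq
  have hI3 : Complex.I ^ 3 = -Complex.I := by rw [pow_succ, hI]; ring
  have hI4 : Complex.I ^ 4 = 1 := Complex.I_pow_four
  subst hx
  have key : μ * ((w - l) * ((w + l) * (w ^ 2 + l ^ 2 - (A + b)))) =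
      Complex.I * (g * w * (w ^ 2 - b) * P) := by
    apply mul_left_cancel₀ (pow_ne_zero 3 hμ)
    simp only [mul_pow, hI, hI3, hI4] at hchar
    linear_combination hchar - μ ^ 4 * hroot
  rw [eq_div_iff hden]
  linear_combination R * Complex.I * key + R * (g * w * (w ^ 2 - b) * P) * hI

/-- Lemma 4.4 of the paper: asymptotic expansion of the large eigenvalues.
If `λₙ` solves the characteristic equation (4.9) and `λₙ/(iμₙ) → l ∈ {l₊, l₋}`, then
`μₙ^(1-α)(λₙ - i l μₙ) → -e^{i(α-1)π/2} ((l² - a₃/ρu)/(4l² - 2m)) (γ/ρz) l^(α-1)`,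
and in particular `μₙ^(1-α) Re λₙ → β < 0`. -/
theorem stmt11 (ρz ρu a₁ a₂ a₃ γ κ α : ℝ) (hρz : 0 < ρz) (hρu : 0 < ρu)
    (ha₁ : 0 < a₁) (ha₃ : 0 < a₃) (ha₂ : a₂ ≠ 0) (hA : a₂ ^ 2 < a₁ * a₃)
    (hγ : 0 < γ) (hκ : 0 ≤ κ) (hα0 : 0 < α) (hα1 : α < 1)
    (l : ℝ)
    (hl : l = Real.sqrt (((a₁ / ρz + a₃ / ρu) +
            Real.sqrt ((a₁ / ρz - a₃ / ρu) ^ 2 + 4 * a₂ ^ 2 / (ρz * ρu))) / 2) ∨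
          l = Real.sqrt (((a₁ / ρz + a₃ / ρu) -
            Real.sqrt ((a₁ / ρz - a₃ / ρu) ^ 2 + 4 * a₂ ^ 2 / (ρz * ρu))) / 2))
    (μ : ℕ → ℝ) (hμpos : ∀ n, 0 < μ n) (hμ : Tendsto μ atTop atTop)
    (lam : ℕ → ℂ)
    (hchar : ∀ n, lam n ^ 4 +
        ((a₁ / ρz + a₃ / ρu : ℝ) : ℂ) * ((μ n : ℝ) : ℂ) ^ 2 * lam n ^ 2 +
        ((γ / ρz : ℝ) : ℂ) * lam n ^ 3 * (lam n + (κ : ℂ)) ^ ((α : ℂ) - 1) +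
        ((γ / ρz * (a₃ / ρu) : ℝ) : ℂ) * ((μ n : ℝ) : ℂ) ^ 2 * lam n *
          (lam n + (κ : ℂ)) ^ ((α : ℂ) - 1) +
        (((a₁ * a₃ - a₂ ^ 2) / (ρz * ρu) : ℝ) : ℂ) * ((μ n : ℝ) : ℂ) ^ 4 = 0)
    (hlim : Tendsto (fun n => lam n / (Complex.I * ((μ n : ℝ) : ℂ))) atTop
      (nhds (l : ℂ))) :
    Tendsto (fun n => (((μ n) ^ (1 - α) : ℝ) : ℂ) *
        (lam n - Complex.I * (l : ℂ) * ((μ n : ℝ) : ℂ))) atTop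
      (nhds (-Complex.exp (Complex.I * ((α : ℂ) - 1) * (π : ℂ) / 2) *
        ((((l ^ 2 - a₃ / ρu) / (4 * l ^ 2 - 2 * (a₁ / ρz + a₃ / ρu))) *
          (γ / ρz) * l ^ (α - 1) : ℝ) : ℂ))) ∧
    Tendsto (fun n => (μ n) ^ (1 - α) * (lam n).re) atTop
      (nhds (-((l ^ 2 - a₃ / ρu) / (4 * l ^ 2 - 2 * (a₁ / ρz + a₃ / ρu))) *
        (γ / (ρz * l ^ (1 - α))) * Real.cos ((1 - α) * π / 2))) ∧
    -((l ^ 2 - a₃ / ρu) / (4 * l ^ 2 - 2 * (a₁ / ρz + a₃ / ρu))) *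
        (γ / (ρz * l ^ (1 - α))) * Real.cos ((1 - α) * π / 2) < 0 := by
  have hA' : 0 < a₁ / ρz := by positivity
  have hb' : 0 < a₃ / ρu := by positivity
  have hc' : 0 < a₂ ^ 2 / (ρz * ρu) := by positivity
  have hcAb : a₂ ^ 2 / (ρz * ρu) < a₁ / ρz * (a₃ / ρu) := by
    rw [div_mul_div_comm]
    gcongr
  have hq : (a₁ * a₃ - a₂ ^ 2) / (ρz * ρu) = a₁ / ρz * (a₃ / ρu) - a₂ ^ 2 / (ρz * ρu) := by
    rw [div_mul_div_comm, sub_div]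
  have hg : 0 < γ / ρz := by positivity
  have hgl : γ / (ρz * l ^ (1 - α)) = γ / ρz / l ^ (1 - α) := by rw [div_div]
  rw [mul_div_assoc] at hl
  rw [hgl]
  rw [hq] at hchar
  -- From here on the data enter only through `A = a₁/ρz`, `b = a₃/ρu`, `c = a₂²/(ρz ρu)`, `g = γ/ρz`.
  generalize a₁ / ρz = A at *
  generalize a₃ / ρu = b at *
  generalize a₂ ^ 2 / (ρz * ρu) = c at *
  generalize γ / ρz = g at *
  obtain ⟨hl0, hroot⟩ := root_facts A b c l hA' hb' hc' hcAb hl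
  have hpos : 0 < (l ^ 2 - b) / (4 * l ^ 2 - 2 * (A + b)) := by
    -- The product equals `2 ((l² - b)² + c)`.
    have hprod : 0 < (l ^ 2 - b) * (4 * l ^ 2 - 2 * (A + b)) := by nlinarith [sq_nonneg (l ^ 2 - b)]
    rcases mul_pos_iff.1 hprod with ⟨h, h'⟩ | ⟨h, h'⟩
    · exact div_pos h h'
    · exact div_pos_of_neg_of_neg h h'
  have hden : 4 * l ^ 2 - 2 * (A + b) ≠ 0 := by
    intro h
    simp [h] at hpos
  have hdenC : (4 * l ^ 2 - 2 * (A + b) : ℂ) ≠ 0 := by exact_mod_cast hden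
  have hlC : (l : ℂ) ≠ 0 := by exact_mod_cast hl0.ne'
  have hrootC : ((l : ℂ) ^ 2 - b) * ((l : ℂ) ^ 2 - A) = c := by exact_mod_cast hroot
  have hμC : ∀ n, (μ n : ℂ) ≠ 0 := fun n => by exact_mod_cast (hμpos n).ne'
  set w : ℕ → ℂ := fun n => lam n / (Complex.I * (μ n : ℂ)) with hw
  have hlam : ∀ n, lam n = Complex.I * μ n * w n := fun n => by
    have := hμC n
    have := Complex.I_ne_zero
    simp only [hw]
    field_simp
  have hz : Tendsto (fun n => (lam n + κ) / (μ n : ℂ)) atTop (nhds (Complex.I * l)) := by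
    have h1 : Tendsto (fun n => ((κ / μ n : ℝ) : ℂ)) atTop (nhds ((0 : ℝ) : ℂ)) :=
      (Complex.continuous_ofReal.tendsto 0).comp (hμ.const_div_atTop κ)
    have h2 := (hlim.const_mul Complex.I).add h1
    simp only [Complex.ofReal_zero, add_zero] at h2
    refine h2.congr fun n => ?_
    have := hμC n
    rw [hlam n]
    push_cast
    field_simp
  have hslit : Complex.I * (l : ℂ) ∈ Complex.slitPlane := by
    rw [Complex.mem_slitPlane_iff]
    right
    simpa using hl0.ne'
  have hP := hz.cpow (tendsto_const_nhds (x := (α : ℂ) - 1)) hslit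
  rw [I_mul_cpow l α hl0] at hP
  have hE : Tendsto (fun n => (w n + l) * (w n ^ 2 + (l : ℂ) ^ 2 - (A + b))) atTop
      (nhds ((l + l : ℂ) * ((l : ℂ) ^ 2 + (l : ℂ) ^ 2 - (A + b)))) :=
    (hlim.add_const _).mul (((hlim.pow 2).add_const _).sub_const _)
  have hE0 : (l + l : ℂ) * ((l : ℂ) ^ 2 + (l : ℂ) ^ 2 - (A + b)) ≠ 0 := by
    have : (l + l : ℂ) * ((l : ℂ) ^ 2 + (l : ℂ) ^ 2 - (A + b)) =
        l * (4 * l ^ 2 - 2 * (A + b)) := by ring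
    rw [this]
    exact mul_ne_zero hlC hdenC
  have hmain := ((((hlim.const_mul (g : ℂ)).mul ((hlim.pow 2).sub_const (b : ℂ))).mul hP).neg).div
    hE hE0
  have h1 : Tendsto (fun n => (((μ n) ^ (1 - α) : ℝ) : ℂ) *
        (lam n - Complex.I * (l : ℂ) * ((μ n : ℝ) : ℂ))) atTop
      (nhds (-Complex.exp (Complex.I * ((α : ℂ) - 1) * (π : ℂ) / 2) *
        ((((l ^ 2 - b) / (4 * l ^ 2 - 2 * (A + b))) * g * l ^ (α - 1) : ℝ) : ℂ))) := by
    convert hmain.congr' ?_ using 2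
    · rw [eq_div_iff hE0]
      have hcancel := div_mul_cancel₀ ((l : ℂ) ^ 2 - b) hdenC
      rw [Complex.ofReal_mul, Complex.ofReal_mul]
      push_cast
      linear_combination (-Complex.exp (Complex.I * ((α : ℂ) - 1) * (π : ℂ) / 2) * g *
        ((l ^ (α - 1) : ℝ) : ℂ) * l) * hcancel
    · filter_upwards [hE.eventually_ne hE0,
        hz.eventually_ne (mul_ne_zero Complex.I_ne_zero hlC)] with n hn hzn
      have hzn' : lam n + κ ≠ 0 := fun h => hzn (by rw [h, zero_div])
      simp only [Pi.div_apply]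
      rw [← rpow_mul_cpow (μ n) α (hμpos n) _ hzn']
      refine (solve_char A b c g l (μ n) _ _ (w n) (lam n) (hμC n) (hlam n) hrootC hn ?_).symm
      have := hchar n
      push_cast at this
      exact this
  refine ⟨h1, ?_, ?_⟩
  · have h2 := (Complex.continuous_re.tendsto _).comp h1
    convert h2 using 2
    -- The subtracted term `i l μₙ` is purely imaginary.
    · simp
    · have harg : Complex.I * ((α : ℂ) - 1) * (π : ℂ) / 2 =
          ((-((1 - α) * π / 2) : ℝ) : ℂ) * Complex.I := by
        push_cast
        ring
      rw [Complex.re_mul_ofReal, Complex.neg_re, harg, Complex.exp_ofReal_mul_I_re, Real.cos_neg,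
        show α - 1 = -(1 - α) by ring, Real.rpow_neg hl0.le]
      ring
  · have hcos : 0 < Real.cos ((1 - α) * π / 2) := by
      apply Real.cos_pos_of_mem_Ioo
      constructor <;> nlinarith [Real.pi_pos]
    have : 0 < l ^ (1 - α) := Real.rpow_pos_of_pos hl0 _
    rw [neg_mul, neg_mul, neg_lt_zero]
    positivity
end

section
/- Let L > 0, 0 < α < 1, κ ≥ 0, γ > 0, let ρ_z, ρ_u, a₁, a₃ > 0 and a₂ ∈ ℝ with a₂ ≠ 0 and a₁a₃ ≥ a₂², and let λ ∈ ℝ with λ ≠ 0. Suppose z, u : [0,L] → ℂ are twice continuously differentiable, satisfy z(0) = z(L) = u(0) = u(L) = 0, and solve −ρ_z λ² z(x) − a₁ z″(x) − a₂ u″(x) + γ iλ (κ + iλ)^{α−1} z(x) = 0 and −ρ_u λ² u(x) − a₃ u″(x) − a₂ z″(x) = 0 for all x ∈ (0,L), where the complex power denotes the principal branch. Then z ≡ 0 and u ≡ 0 on [0,L]. -/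
open Real

/-!
Energy argument. Testing the two equations with `conj z` and `conj u` and taking imaginary parts,
every conservative term drops out. In pointwise form, the flux
`F = Im ((a₁ z' + a₂ u') conj z + (a₃ u' + a₂ z') conj u)` has derivative
`F' = γ λ Re ((κ + iλ)^(α-1)) |z|²` on `(0, L)`. Since `|arg (κ + iλ)| ≤ π/2` and `|α - 1| < 1`, the
real part is positive (`re_cpow_pos`), so `λ F` is monotone; the boundary conditions make it vanish at
both ends, hence it is identically zero and `z ≡ 0`. The first equation then gives `a₂ u'' = 0`, and
the second one `ρ_u λ² u = 0`.
-/

/-- The damping symbol is strictly dissipative: its argument is `(α - 1) arg (κ + iλ)`, which lies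
in `(-π/2, π/2)`. -/
lemma re_cpow_pos (α κ lam : ℝ) (hα0 : 0 < α) (hα1 : α < 1) (hκ : 0 ≤ κ) (hlam : lam ≠ 0) :
    0 < (((κ : ℂ) + Complex.I * (lam : ℂ)) ^ ((α : ℂ) - 1)).re := by
  set s : ℂ := (κ : ℂ) + Complex.I * (lam : ℂ) with hs
  have hs0 : s ≠ 0 := by
    intro h
    apply hlam
    simpa [hs] using congrArg Complex.im h
  have harg : |s.arg| ≤ π / 2 := by
    rw [Complex.abs_arg_le_pi_div_two_iff]
    simpa [hs] using hκ
  have hpow : s ^ ((α : ℂ) - 1) = s ^ (((α - 1 : ℝ)) : ℂ) := by push_cast; rfl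
  rw [hpow, Complex.cpow_def_of_ne_zero hs0, Complex.exp_re]
  refine mul_pos (Real.exp_pos _) (Real.cos_pos_of_mem_Ioo ?_)
  have him : (Complex.log s * (((α - 1 : ℝ)) : ℂ)).im = s.arg * (α - 1) := by
    rw [Complex.im_mul_ofReal, Complex.log_im]
  rw [him]
  have hlt : |s.arg * (α - 1)| < π / 2 := by
    rw [abs_mul, abs_of_neg (by linarith : α - 1 < 0)]
    nlinarith [Real.pi_pos, abs_nonneg s.arg]
  exact ⟨(abs_lt.mp hlt).1, (abs_lt.mp hlt).2⟩

/-- First and second derivatives at interior points, in `HasDerivAt` form. -/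
lemma interior_derivs {L : ℝ} (hL : 0 < L) {f : ℝ → ℂ} (hf : ContDiffOn ℝ 2 f (Set.Icc 0 L))
    {x : ℝ} (hx : x ∈ Set.Ioo 0 L) :
    HasDerivAt f (derivWithin f (Set.Icc 0 L) x) x ∧
      HasDerivAt (derivWithin f (Set.Icc 0 L)) (iteratedDerivWithin 2 f (Set.Icc 0 L) x) x := by
  have hU : UniqueDiffOn ℝ (Set.Icc 0 L) := uniqueDiffOn_Icc hL
  have hn : Set.Icc 0 L ∈ nhds x := Icc_mem_nhds hx.1 hx.2
  have hxI : x ∈ Set.Icc 0 L := Set.Ioo_subset_Icc_self hx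
  have h1 : ContDiffOn ℝ 1 (derivWithin f (Set.Icc 0 L)) (Set.Icc 0 L) :=
    hf.derivWithin hU (by norm_num)
  refine ⟨((hf.differentiableOn (by norm_num)) x hxI).hasDerivWithinAt.hasDerivAt hn, ?_⟩
  have h2 := ((h1.differentiableOn (by norm_num)) x hxI).hasDerivWithinAt.hasDerivAt hn
  rwa [iteratedDerivWithin_succ, iteratedDerivWithin_one]

/-- reduced form of Lemma 5.3: the stationary system obtained by eliminating
the diffusive variable has only the trivial solution, i.e. the generator has no purely
imaginary eigenvalues `iλ`, `λ ≠ 0`. -/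
theorem stmt12 (L α κ γ ρz ρu a₁ a₂ a₃ lam : ℝ)
    (hL : 0 < L) (hα0 : 0 < α) (hα1 : α < 1) (hκ : 0 ≤ κ) (hγ : 0 < γ)
    (hρz : 0 < ρz) (hρu : 0 < ρu) (ha₁ : 0 < a₁) (ha₃ : 0 < a₃)
    (ha₂ : a₂ ≠ 0) (hA : a₂ ^ 2 ≤ a₁ * a₃) (hlam : lam ≠ 0)
    (z u : ℝ → ℂ)
    (hz : ContDiffOn ℝ 2 z (Set.Icc 0 L)) (hu : ContDiffOn ℝ 2 u (Set.Icc 0 L))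
    (hbz0 : z 0 = 0) (hbzL : z L = 0) (hbu0 : u 0 = 0) (hbuL : u L = 0)
    (heq1 : ∀ x ∈ Set.Ioo (0 : ℝ) L,
      -(ρz : ℂ) * (lam : ℂ) ^ 2 * z x -
        (a₁ : ℂ) * iteratedDerivWithin 2 z (Set.Icc 0 L) x -
        (a₂ : ℂ) * iteratedDerivWithin 2 u (Set.Icc 0 L) x +
        (γ : ℂ) * (Complex.I * (lam : ℂ)) *
          ((κ : ℂ) + Complex.I * (lam : ℂ)) ^ ((α : ℂ) - 1) * z x = 0)
    (heq2 : ∀ x ∈ Set.Ioo (0 : ℝ) L,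
      -(ρu : ℂ) * (lam : ℂ) ^ 2 * u x -
        (a₃ : ℂ) * iteratedDerivWithin 2 u (Set.Icc 0 L) x -
        (a₂ : ℂ) * iteratedDerivWithin 2 z (Set.Icc 0 L) x = 0) :
    ∀ x ∈ Set.Icc (0 : ℝ) L, z x = 0 ∧ u x = 0 := by
  have hU : UniqueDiffOn ℝ (Set.Icc 0 L) := uniqueDiffOn_Icc hL
  have hw := re_cpow_pos α κ lam hα0 hα1 hκ hlam
  set w : ℂ := ((κ : ℂ) + Complex.I * (lam : ℂ)) ^ ((α : ℂ) - 1)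
  set dz := derivWithin z (Set.Icc 0 L)
  set du := derivWithin u (Set.Icc 0 L)
  have hdzc : ContinuousOn dz (Set.Icc 0 L) := hz.continuousOn_derivWithin hU (by norm_num)
  have hduc : ContinuousOn du (Set.Icc 0 L) := hu.continuousOn_derivWithin hU (by norm_num)
  have hzc := hz.continuousOn
  have huc := hu.continuousOn
  let F : ℝ → ℂ := fun x =>
    ((a₁ : ℂ) * dz x + (a₂ : ℂ) * du x) * star (z x) +
      ((a₃ : ℂ) * du x + (a₂ : ℂ) * dz x) * star (u x)
  let G : ℝ → ℝ := fun x => lam * (F x).im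
  have hGc : ContinuousOn G (Set.Icc 0 L) := by
    have hFc : ContinuousOn F (Set.Icc 0 L) := by fun_prop
    exact continuousOn_const.mul (Complex.continuous_im.comp_continuousOn hFc)
  have hG' : ∀ x ∈ Set.Ioo 0 L, HasDerivAt G (γ * lam ^ 2 * w.re * Complex.normSq (z x)) x := by
    intro x hx
    obtain ⟨hz1, hz2⟩ := interior_derivs hL hz hx
    obtain ⟨hu1, hu2⟩ := interior_derivs hL hu hx
    have hF := (((hz2.const_mul (a₁ : ℂ)).add (hu2.const_mul (a₂ : ℂ))).mul hz1.star).add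
      (((hu2.const_mul (a₃ : ℂ)).add (hz2.const_mul (a₂ : ℂ))).mul hu1.star)
    have hI := (Complex.imCLM.hasFDerivAt.comp_hasDerivAt x hF).const_mul lam
    refine hI.congr_deriv ?_
    have e1 := heq1 x hx
    have e2 := heq2 x hx
    -- The equations express both second-order fluxes through `z x` and `u x`.
    have k1 : (a₁ : ℂ) * iteratedDerivWithin 2 z (Set.Icc 0 L) x +
        (a₂ : ℂ) * iteratedDerivWithin 2 u (Set.Icc 0 L) x =
        -(ρz : ℂ) * (lam : ℂ) ^ 2 * z x + (γ : ℂ) * (Complex.I * (lam : ℂ)) * w * z x := by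
      linear_combination -e1
    have k2 : (a₃ : ℂ) * iteratedDerivWithin 2 u (Set.Icc 0 L) x +
        (a₂ : ℂ) * iteratedDerivWithin 2 z (Set.Icc 0 L) x =
        -(ρu : ℂ) * (lam : ℂ) ^ 2 * u x := by
      linear_combination -e2
    rw [k1, k2]
    simp only [Complex.imCLM_apply, Complex.add_im, Complex.mul_im, Complex.mul_re, Complex.add_re,
      Complex.neg_re, Complex.neg_im, Complex.ofReal_re, Complex.ofReal_im, Complex.I_re,
      Complex.I_im, Complex.star_def, Complex.conj_re, Complex.conj_im, Complex.normSq_apply,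
      Pi.add_apply, ← Complex.ofReal_pow, Pi.star_apply]
    ring
  have hpos : ∀ x, 0 ≤ γ * lam ^ 2 * w.re * Complex.normSq (z x) := fun x => by
    have := Complex.normSq_nonneg (z x)
    positivity
  have hmono : MonotoneOn G (Set.Icc 0 L) := by
    refine monotoneOn_of_deriv_nonneg (convex_Icc 0 L) hGc ?_ ?_
    · rw [interior_Icc]
      exact fun x hx => (hG' x hx).differentiableAt.differentiableWithinAt
    · rw [interior_Icc]
      intro x hx
      rw [(hG' x hx).deriv]
      exact hpos x
  have hG0 : G 0 = 0 := by simp [G, F, hbz0, hbu0]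
  have hGL : G L = 0 := by simp [G, F, hbzL, hbuL]
  have hGz : ∀ x ∈ Set.Icc 0 L, G x = 0 := fun x hx =>
    le_antisymm (hGL ▸ hmono hx (Set.right_mem_Icc.2 hL.le) hx.2)
      (hG0 ▸ hmono (Set.left_mem_Icc.2 hL.le) hx hx.1)
  have hzI : ∀ x ∈ Set.Ioo 0 L, z x = 0 := by
    intro x hx
    have h0 : HasDerivAt G 0 x := (hasDerivAt_const x (0 : ℝ)).congr_of_eventuallyEq
      (Filter.eventually_of_mem (Icc_mem_nhds hx.1 hx.2) hGz)
    have h := (hG' x hx).unique h0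
    have hc : γ * lam ^ 2 * w.re ≠ 0 := by positivity
    exact Complex.normSq_eq_zero.1 ((mul_eq_zero.1 h).resolve_left hc)
  have hends : ∀ x ∈ Set.Icc 0 L, x = 0 ∨ x = L ∨ x ∈ Set.Ioo 0 L := by
    intro x hx
    rcases hx.1.eq_or_lt with h | h
    · exact Or.inl h.symm
    · rcases hx.2.eq_or_lt with h' | h'
      · exact Or.inr (Or.inl h')
      · exact Or.inr (Or.inr ⟨h, h'⟩)
  have hzero : ∀ x ∈ Set.Icc 0 L, z x = 0 := by
    intro x hx
    rcases hends x hx with rfl | rfl | h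
    · exact hbz0
    · exact hbzL
    · exact hzI x h
  have hz2 : ∀ x ∈ Set.Icc 0 L, iteratedDerivWithin 2 z (Set.Icc 0 L) x = 0 := by
    intro x hx
    have hcongr : Set.EqOn z (fun _ => (0 : ℂ)) (Set.Icc 0 L) := hzero
    rw [iteratedDerivWithin_congr hcongr hx]
    simp [iteratedDerivWithin_const]
  have huI : ∀ x ∈ Set.Ioo 0 L, u x = 0 := by
    intro x hx
    have hxI := Set.Ioo_subset_Icc_self hx
    have e1 := heq1 x hx
    have e2 := heq2 x hx
    rw [hz2 x hxI, hzero x hxI] at e1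
    rw [hz2 x hxI] at e2
    have hu2 : iteratedDerivWithin 2 u (Set.Icc 0 L) x = 0 := by
      simpa [ha₂] using e1
    rw [hu2] at e2
    simpa [hρu.ne', hlam] using e2
  intro x hx
  refine ⟨hzero x hx, ?_⟩
  rcases hends x hx with rfl | rfl | h
  · exact hbu0
  · exact hbuL
  · exact huI x h
end
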